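/- Every nonzero polynomial τ ∈ ℂ[t_1, t_3, t_5, …] that is a tau-function of the BKP hierarchy satisfies the simplest Hirota bilinear equation of the BKP hierarchy, (D_1^6 − 5 D_1^3 D_3 − 5 D_3^2 + 9 D_1 D_5) τ·τ = 0; written out (with subscripts denoting partial derivatives in t_1, t_3, t_5): τ τ_{t_1^6} − 6 τ_{t_1} τ_{t_1^5} + 15 τ_{t_1^2} τ_{t_1^4} − 10 (τ_{t_1^3})^2 − 5(τ τ_{t_1^3 t_3} − 3 τ_{t_1} τ_{t_1^2 t_3} + 3 τ_{t_1^2} τ_{t_1 t_3} − τ_{t_1^3} τ_{t_3}) − 5(τ τ_{t_3 t_3} − (τ_{t_3})^2) + 9(τ τ_{t_1 t_5} − τ_{t_1} τ_{t_5}) = 0. -/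

import Mathlib

/-- Elementary Schur polynomials `s_m`, defined in any associative `ℂ`-algebra by the
generating-function recursion `m*s_m = ∑_{k=1}^m k*x_k*s_{m-k}`, which for commuting
arguments is equivalent to `exp(∑_{k≥1} x_k z^k) = ∑_{m≥0} s_m(x) z^m`.
The argument sequence is indexed so that `x (k+1)` is `x_{k+1}`; `x 0` is ignored. -/
noncomputable def schur {A : Type*} [Ring A] [Algebra ℂ A] (x : ℕ → A) : ℕ → A
  | 0 => 1
  | m + 1 =>
      ((m + 1 : ℂ))⁻¹ • ∑ k ∈ Finset.range (m + 1), ((k + 1 : ℂ)) • (x (k + 1) * schur x (m - k))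
  decreasing_by exact Nat.lt_succ_of_le (Nat.sub_le m k)

/-- `R`: polynomial ring ℂ[t₁,t₃,t₅,…]; variable `i : ℕ` stands for `t_{2i+1}`. -/
abbrev ROdd : Type := MvPolynomial ℕ ℂ

/-- `ℂ[t,t']`: `Sum.inl i` is `t_{2i+1}`, `Sum.inr i` is `t'_{2i+1}`. -/
abbrev RTwo : Type := MvPolynomial (ℕ ⊕ ℕ) ℂ

/-- `τ(t)·τ(t') ∈ ℂ[t,t']`. -/
noncomputable def doubling (τ : ROdd) : RTwo :=
  MvPolynomial.rename Sum.inl τ * MvPolynomial.rename Sum.inr τ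

/-- The sequence ã with `ã_{2j-1} = t_{2j-1} - t'_{2j-1}` and `ã_{2j} = 0`. -/
noncomputable def aSeq : ℕ → RTwo := fun j =>
  if Odd j then MvPolynomial.X (Sum.inl ((j - 1) / 2)) - MvPolynomial.X (Sum.inr ((j - 1) / 2))
  else 0

/-- The commuting derivations b̃ with
`b̃_{2j-1} = (2/(2j-1)) (∂/∂t'_{2j-1} - ∂/∂t_{2j-1})` and `b̃_{2j} = 0`. -/
noncomputable def bSeq : ℕ → Module.End ℂ RTwo := fun j =>
  if Odd j then
    ((2 : ℂ) / (j : ℂ)) •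
      ((MvPolynomial.pderiv (Sum.inr ((j - 1) / 2))).toLinearMap -
        (MvPolynomial.pderiv (Sum.inl ((j - 1) / 2))).toLinearMap)
  else 0

/-- `Ω_{-M}(τ) = ∑_{k≥0} s_k(ã) · s_{k+M}(b̃)(τ(t)τ(t'))`. -/
noncomputable def OmegaNeg (M : ℕ) (τ : ROdd) : RTwo :=
  ∑ᶠ k : ℕ, schur aSeq k * (schur bSeq (k + M)) (doubling τ)

/-- The partial derivative `∂/∂t_{2i+1}` as a `ℂ`-linear endomorphism of `ROdd`. -/
noncomputable def d (i : ℕ) : Module.End ℂ ROdd := (MvPolynomial.pderiv i).toLinearMap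

/-!
Apply `(∂/∂t₁ - ∂/∂t'₁)(∂/∂t₅ - ∂/∂t'₅)` to `Ω₀(τ) = τ(t)τ(t')` and restrict to `t' = t`. There `ã`
vanishes, and each of the two derivations maps `s_k(ã)` to twice a lower Schur polynomial, so only
the terms `k = 0, 1, 5, 6` of `Ω₀` survive. The term `k = 0` cancels against the right-hand side.
Since `b̃_j` is a multiple of the Hirota derivation `D_j`, what remains is a polynomial in
`D₁, D₃, D₅` applied to `τ(t)τ(t')`, namely a multiple of `D₁⁶ - 5 D₁³ D₃ - 5 D₃² + 9 D₁ D₅`.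
-/

open Finset MvPolynomial

section Schur

variable {A : Type*} [Ring A] [Algebra ℂ A] (x : ℕ → A)

theorem schur_zero : schur x 0 = 1 := by
  rw [schur]

theorem natCast_smul_schur (m : ℕ) :
    (m : ℂ) • schur x m = ∑ p ∈ antidiagonal m, (p.1 : ℂ) • (x p.1 * schur x p.2) := by
  cases m with
  | zero => simp
  | succ m =>
    rw [schur, smul_smul, Nat.cast_succ, mul_inv_cancel₀ (Nat.cast_add_one_ne_zero m), one_smul,
      Nat.sum_antidiagonal_succ, Nat.sum_antidiagonal_eq_sum_range_succ_mk]
    simp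

variable {x}

theorem schur_one : schur x 1 = x 1 := by
  rw [schur]
  simp [schur_zero]

theorem schur_two (h₂ : x 2 = 0) : schur x 2 = (1 / 2 : ℂ) • x 1 ^ 2 := by
  rw [schur]
  norm_num [sum_range_succ, schur_zero, schur_one, h₂, sq]

theorem schur_three (h₂ : x 2 = 0) : schur x 3 = (1 / 6 : ℂ) • x 1 ^ 3 + x 3 := by
  have recursion : schur x 3 = (1 / 3 : ℂ) • (x 1 * schur x 2 + (3 : ℂ) • x 3) := by
    rw [schur]
    norm_num [sum_range_succ, schur_zero, h₂]
  rw [recursion, schur_two h₂]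
  simp only [mul_smul_comm, ← pow_succ']
  module

theorem schur_four (h₂ : x 2 = 0) (h₄ : x 4 = 0) (h₁₃ : Commute (x 1) (x 3)) :
    schur x 4 = (1 / 24 : ℂ) • x 1 ^ 4 + x 1 * x 3 := by
  have recursion : schur x 4 =
      (1 / 4 : ℂ) • (x 1 * schur x 3 + (3 : ℂ) • (x 3 * schur x 1)) := by
    rw [schur]
    norm_num [sum_range_succ, h₂, h₄]
  rw [recursion, schur_three h₂, schur_one, h₁₃.symm.eq]
  simp only [mul_add, mul_smul_comm, ← pow_succ']
  module

theorem schur_five (h₂ : x 2 = 0) (h₄ : x 4 = 0) (h₁₃ : Commute (x 1) (x 3)) :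
    schur x 5 = (1 / 120 : ℂ) • x 1 ^ 5 + (1 / 2 : ℂ) • (x 1 ^ 2 * x 3) + x 5 := by
  have recursion : schur x 5 =
      (1 / 5 : ℂ) • (x 1 * schur x 4 + (3 : ℂ) • (x 3 * schur x 2) + (5 : ℂ) • x 5) := by
    rw [schur]
    norm_num [sum_range_succ, schur_zero, h₂, h₄]
  rw [recursion, schur_four h₂ h₄ h₁₃, schur_two h₂]
  simp only [mul_add, mul_smul_comm, ← pow_succ', ← mul_assoc, ← sq, (h₁₃.symm.pow_right 2).eq]
  module

theorem schur_six (h₂ : x 2 = 0) (h₄ : x 4 = 0) (h₆ : x 6 = 0) (h₁₃ : Commute (x 1) (x 3))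
    (h₁₅ : Commute (x 1) (x 5)) :
    schur x 6 = (1 / 720 : ℂ) • x 1 ^ 6 + (1 / 6 : ℂ) • (x 1 ^ 3 * x 3) + (1 / 2 : ℂ) • x 3 ^ 2
      + x 1 * x 5 := by
  have recursion : schur x 6 = (1 / 6 : ℂ) •
      (x 1 * schur x 5 + (3 : ℂ) • (x 3 * schur x 3) + (5 : ℂ) • (x 5 * schur x 1)) := by
    rw [schur]
    norm_num [sum_range_succ, h₂, h₄, h₆]
  rw [recursion, schur_five h₂ h₄ h₁₃, schur_three h₂, schur_one, h₁₅.symm.eq]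
  simp only [mul_add, mul_smul_comm, ← pow_succ', ← mul_assoc, ← sq, (h₁₃.symm.pow_right 3).eq]
  module

theorem map_schur_of_forall_map_eq_zero {B : Type*} [Ring B] [Algebra ℂ B] (φ : A →ₐ[ℂ] B)
    (hx : ∀ j, φ (x j) = 0) (m : ℕ) : φ (schur x m) = if m = 0 then 1 else 0 := by
  cases m with
  | zero => simp [schur_zero]
  | succ m =>
    rw [schur]
    simp [hx]

theorem schur_apply_mem_of_lowers_degree {M : Type*} [AddCommGroup M] [Module ℂ M]
    {𝓜 : ℤ → Submodule ℂ M} {x : ℕ → Module.End ℂ M}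
    (hx : ∀ (j : ℕ) (n : ℤ), ∀ v ∈ 𝓜 n, x j v ∈ 𝓜 (n - j)) {n : ℤ} {v : M} (hv : v ∈ 𝓜 n) (m : ℕ) :
    schur x m v ∈ 𝓜 (n - m) := by
  induction m using Nat.strong_induction_on with
  | _ m ih =>
    cases m with
    | zero => simpa [schur_zero] using hv
    | succ m =>
      rw [schur, LinearMap.smul_apply, LinearMap.sum_apply]
      refine Submodule.smul_mem _ _ (Submodule.sum_mem _ fun k hk ↦ Submodule.smul_mem _ _ ?_)
      have hkm : k ≤ m := mem_range_succ_iff.mp hk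
      have hdegree : n - ((m + 1 : ℕ) : ℤ) = n - (m - k : ℕ) - (k + 1 : ℕ) := by omega
      rw [hdegree]
      exact hx (k + 1) _ _ (ih (m - k) (by omega))

end Schur

section Derivation

theorem sum_antidiagonal_mul_left_comm {A : Type*} [CommSemiring A] (f g h : ℕ → A) (m : ℕ) :
    ∑ p ∈ antidiagonal m, f p.1 * ∑ q ∈ antidiagonal p.2, g q.1 * h q.2 =
      ∑ p ∈ antidiagonal m, g p.1 * ∑ q ∈ antidiagonal p.2, f q.1 * h q.2 := by
  simpa only [PowerSeries.coeff_mul, PowerSeries.coeff_mk] using congrArg (PowerSeries.coeff m)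
    (mul_left_comm (PowerSeries.mk f) (PowerSeries.mk g) (PowerSeries.mk h))

variable {A : Type*} [CommRing A] [Algebra ℂ A]

-- Coefficientwise form of `D (exp ξ) = D ξ * exp ξ` for `ξ = ∑_{k ≥ 1} x_k z^k`.
theorem derivation_schur (D : Derivation ℂ A A) {x : ℕ → A} (hx : D (x 0) = 0) (m : ℕ) :
    D (schur x m) = ∑ p ∈ antidiagonal m, D (x p.1) * schur x p.2 := by
  induction m using Nat.strong_induction_on with
  | _ m ih =>
    rcases Nat.eq_zero_or_pos m with rfl | hm
    · simp [schur_zero, hx]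
    have ih_smul : ∀ p ∈ antidiagonal m, (p.1 : ℂ) • (x p.1 * D (schur x p.2)) =
        ((p.1 : ℂ) • x p.1) * ∑ q ∈ antidiagonal p.2, D (x q.1) * schur x q.2 := by
      rintro ⟨i, j⟩ hij
      rw [HasAntidiagonal.mem_antidiagonal] at hij
      rcases Nat.eq_zero_or_pos i with rfl | hi
      · simp
      · rw [ih j (by omega), smul_mul_assoc]
    refine smul_right_injective A (Nat.cast_ne_zero.mpr hm.ne' : (m : ℂ) ≠ 0) ?_
    calc (m : ℂ) • D (schur x m)
        = ∑ p ∈ antidiagonal m, (p.1 : ℂ) • (D (x p.1) * schur x p.2)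
          + ∑ p ∈ antidiagonal m, (p.1 : ℂ) • (x p.1 * D (schur x p.2)) := by
          rw [← D.map_smul, natCast_smul_schur, map_sum, ← sum_add_distrib]
          refine sum_congr rfl fun p _ ↦ ?_
          rw [D.map_smul, D.leibniz, smul_eq_mul, smul_eq_mul, ← smul_add, add_comm,
            mul_comm (schur x p.2)]
      _ = ∑ p ∈ antidiagonal m, (p.1 : ℂ) • (D (x p.1) * schur x p.2)
          + ∑ p ∈ antidiagonal m, D (x p.1) * ((p.2 : ℂ) • schur x p.2) := by
          rw [sum_congr rfl ih_smul,
            sum_antidiagonal_mul_left_comm (fun i ↦ (i : ℂ) • x i) (fun i ↦ D (x i)) (schur x)]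
          simp only [natCast_smul_schur, smul_mul_assoc]
      _ = (m : ℂ) • ∑ p ∈ antidiagonal m, D (x p.1) * schur x p.2 := by
          rw [← sum_add_distrib, smul_sum]
          refine sum_congr rfl fun p hp ↦ ?_
          rw [← HasAntidiagonal.mem_antidiagonal.mp hp, mul_smul_comm, ← add_smul, Nat.cast_add]

end Derivation

section Hirota

variable {σ R : Type*}

section CommSemiring

variable [CommSemiring R]

/-- The product `f(t) g(t')` in two independent families of variables. -/
noncomputable def externalProduct (f g : MvPolynomial σ R) : MvPolynomial (σ ⊕ σ) R :=
  rename Sum.inl f * rename Sum.inr g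

/-- Restriction to the diagonal `t' = t`. -/
noncomputable def diagonal : MvPolynomial (σ ⊕ σ) R →ₐ[R] MvPolynomial σ R :=
  rename (Sum.elim id id)

theorem diagonal_externalProduct (f g : MvPolynomial σ R) :
    diagonal (externalProduct f g) = f * g := by
  simp [diagonal, externalProduct, rename_rename]

theorem pderiv_rename_of_notMem_range {τ : Type*} {e : σ → τ} {j : τ} (hj : j ∉ Set.range e)
    (f : MvPolynomial σ R) : pderiv j (rename e f) = 0 := by
  classical
  refine pderiv_eq_zero_of_notMem_vars fun h ↦ hj ?_
  obtain ⟨i, -, hi⟩ := mem_image.mp (vars_rename e f h)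
  exact ⟨i, hi⟩

end CommSemiring

variable [CommRing R]

/-- The derivation `∂/∂t_i - ∂/∂t'_i`, so that the Hirota derivative `P(D) f·g` is the restriction
of `P(hirotaD) (f(t) g(t'))` to the diagonal. -/
noncomputable def hirotaD (i : σ) :
    Derivation R (MvPolynomial (σ ⊕ σ) R) (MvPolynomial (σ ⊕ σ) R) :=
  pderiv (Sum.inl i) - pderiv (Sum.inr i)

theorem hirotaD_externalProduct (i : σ) (f g : MvPolynomial σ R) :
    hirotaD i (externalProduct f g) =
      externalProduct (pderiv i f) g - externalProduct f (pderiv i g) := by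
  have inr_left : pderiv (Sum.inr i) (rename Sum.inl f : MvPolynomial (σ ⊕ σ) R) = 0 :=
    pderiv_rename_of_notMem_range (by simp) f
  have inl_right : pderiv (Sum.inl i) (rename Sum.inr g : MvPolynomial (σ ⊕ σ) R) = 0 :=
    pderiv_rename_of_notMem_range (by simp) g
  rw [hirotaD, Derivation.sub_apply, externalProduct, pderiv_mul, pderiv_mul, inr_left, inl_right,
    pderiv_rename Sum.inl_injective, pderiv_rename Sum.inr_injective]
  simp only [externalProduct]
  ring

theorem commute_hirotaD (i j : σ) :
    Commute (hirotaD (R := R) i).toLinearMap (hirotaD (R := R) j).toLinearMap := by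
  classical
  have bracket_eq_zero : ⁅hirotaD (R := R) i, hirotaD (R := R) j⁆ = 0 := by
    refine derivation_ext fun k ↦ ?_
    simp only [Derivation.commutator_apply, hirotaD, Derivation.sub_apply, pderiv_X,
      Pi.single_apply]
    split_ifs <;> simp
  refine LinearMap.ext fun F ↦ sub_eq_zero.mp ?_
  simpa [Derivation.commutator_apply] using congrArg (· F) bracket_eq_zero

end Hirota

local notation:max "𝐃" i:max => Derivation.toLinearMap (hirotaD (R := ℂ) i)

theorem diagonal_aSeq (j : ℕ) : diagonal (aSeq j) = 0 := by
  unfold aSeq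
  split_ifs <;> simp [diagonal]

theorem hirotaD_aSeq (i j : ℕ) : hirotaD i (aSeq j) = if j = 2 * i + 1 then 2 else 0 := by
  rcases Nat.even_or_odd' j with ⟨r, rfl | rfl⟩
  · rw [aSeq, if_neg (by simp), if_neg (by omega), map_zero]
  · by_cases hri : r = i
    · simp [aSeq, hirotaD, pderiv_X, hri, one_add_one_eq_two]
    · simp [aSeq, hirotaD, pderiv_X, hri]

theorem hirotaD_schur_aSeq (i m : ℕ) : hirotaD i (schur aSeq m) =
    if 2 * i + 1 ≤ m then (2 : ℂ) • schur aSeq (m - (2 * i + 1)) else 0 := by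
  rw [derivation_schur _ (by simp [aSeq]), Nat.sum_antidiagonal_eq_sum_range_succ_mk]
  simp only [hirotaD_aSeq, ite_mul, zero_mul, sum_ite_eq', mem_range_succ_iff]
  simp [ofNat_smul_eq_nsmul]

theorem diagonal_schur_aSeq (m : ℕ) : diagonal (schur aSeq m) = if m = 0 then 1 else 0 :=
  map_schur_of_forall_map_eq_zero diagonal diagonal_aSeq m

theorem diagonal_hirotaD_schur_aSeq (i m : ℕ) :
    diagonal (hirotaD i (schur aSeq m)) = if m = 2 * i + 1 then 2 else 0 := by
  rw [hirotaD_schur_aSeq]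
  split_ifs with hle heq heq
  · rw [map_smul, diagonal_schur_aSeq, if_pos (by omega), ofNat_smul_eq_nsmul]
    norm_num
  · rw [map_smul, diagonal_schur_aSeq, if_neg (by omega), smul_zero]
  · omega
  · exact map_zero _

theorem diagonal_hirotaD_hirotaD_schur_aSeq (i j m : ℕ) :
    diagonal (hirotaD i (hirotaD j (schur aSeq m))) =
      if m = 2 * i + 2 * j + 2 then 4 else 0 := by
  rw [hirotaD_schur_aSeq]
  split_ifs with hle heq heq
  · rw [Derivation.map_smul, map_smul, diagonal_hirotaD_schur_aSeq, if_pos (by omega),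
      ofNat_smul_eq_nsmul]
    norm_num
  · rw [Derivation.map_smul, map_smul, diagonal_hirotaD_schur_aSeq, if_neg (by omega), smul_zero]
  · omega
  · simp

theorem diagonal_hirotaD_hirotaD_schur_aSeq_mul (i j m : ℕ) (G : RTwo) :
    diagonal (hirotaD i (hirotaD j (schur aSeq m * G))) =
      (if m = 0 then diagonal (hirotaD i (hirotaD j G)) else 0)
        + (if m = 2 * i + 1 then 2 * diagonal (hirotaD j G) else 0)
        + (if m = 2 * j + 1 then 2 * diagonal (hirotaD i G) else 0)
        + (if m = 2 * i + 2 * j + 2 then 4 * diagonal G else 0) := by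
  have leibniz : hirotaD i (hirotaD j (schur aSeq m * G)) =
      schur aSeq m * hirotaD i (hirotaD j G) + hirotaD i (schur aSeq m) * hirotaD j G
        + hirotaD j (schur aSeq m) * hirotaD i G + hirotaD i (hirotaD j (schur aSeq m)) * G := by
    simp only [Derivation.leibniz, map_add, smul_eq_mul]
    ring
  simp only [leibniz, map_add, map_mul, diagonal_schur_aSeq, diagonal_hirotaD_schur_aSeq,
    diagonal_hirotaD_hirotaD_schur_aSeq, ite_mul, one_mul, zero_mul]

theorem bSeq_two_mul (i : ℕ) : bSeq (2 * i) = 0 := by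
  simp [bSeq]

theorem bSeq_two_mul_add_one (i : ℕ) :
    bSeq (2 * i + 1) = (-2 / (2 * i + 1) : ℂ) • 𝐃 i := by
  refine LinearMap.ext fun F ↦ ?_
  simp only [bSeq, hirotaD, if_pos (odd_two_mul_add_one i), add_tsub_cancel_right,
    mul_div_cancel_left₀ i two_ne_zero, LinearMap.smul_apply, LinearMap.sub_apply,
    Derivation.coeFn_coe, Derivation.sub_apply]
  push_cast
  module

/-- The grading of `ℂ[t,t']` in which `t_k` and `t'_k` have weight `k`; it is `ℤ`-valued so that
lowering the weight below zero yields the zero polynomial. -/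
def timeWeight : ℕ ⊕ ℕ → ℤ := Sum.elim (2 * · + 1) (2 * · + 1)

theorem timeWeight_nonneg (i : ℕ ⊕ ℕ) : 0 ≤ timeWeight i := by
  rcases i with i | i <;> simp only [timeWeight, Sum.elim_inl, Sum.elim_inr] <;> omega

theorem bSeq_apply_mem_weightedHomogeneousSubmodule (j : ℕ) (n : ℤ) (F : RTwo)
    (hF : F ∈ weightedHomogeneousSubmodule ℂ timeWeight n) :
    bSeq j F ∈ weightedHomogeneousSubmodule ℂ timeWeight (n - j) := by
  rcases Nat.even_or_odd' j with ⟨i, rfl | rfl⟩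
  · simp [bSeq_two_mul]
  · rw [bSeq_two_mul_add_one]
    refine Submodule.smul_mem _ _ (Submodule.sub_mem _ ?_ ?_) <;>
      exact IsWeightedHomogeneous.pderiv hF (by simp [timeWeight])

theorem eq_zero_of_isWeightedHomogeneous_of_neg {σ R : Type*} [CommSemiring R] {w : σ → ℤ}
    (hw : ∀ i, 0 ≤ w i) {n : ℤ} (hn : n < 0) {F : MvPolynomial σ R}
    (hF : F.IsWeightedHomogeneous w n) : F = 0 := by
  refine MvPolynomial.ext _ _ fun s ↦ hF.coeff_eq_zero s fun hs ↦ ?_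
  have : 0 ≤ Finsupp.weight w s := by
    rw [Finsupp.weight_apply]
    exact sum_nonneg fun i _ ↦ nsmul_nonneg (hw i) _
  omega

theorem finite_support_schur_bSeq_apply (F : RTwo) :
    (Function.support fun m ↦ schur bSeq m F).Finite := by
  induction F using MvPolynomial.induction_on' with
  | monomial s a =>
    refine (Set.finite_Iic (Finsupp.weight timeWeight s).toNat).subset fun m hm ↦ ?_
    by_contra hlt
    rw [Set.mem_Iic, not_le] at hlt
    have hmem : schur bSeq m (monomial s a) ∈
        weightedHomogeneousSubmodule ℂ timeWeight (Finsupp.weight timeWeight s - m) :=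
      schur_apply_mem_of_lowers_degree bSeq_apply_mem_weightedHomogeneousSubmodule
        (isWeightedHomogeneous_monomial timeWeight s a rfl) m
    exact hm (eq_zero_of_isWeightedHomogeneous_of_neg timeWeight_nonneg (by omega) hmem)
  | add p q hp hq =>
    simp only [map_add]
    exact (hp.union hq).subset (Function.support_add _ _)

theorem diagonal_hirotaD_hirotaD_OmegaNeg_zero (i j : ℕ) (τ : ROdd) :
    diagonal (hirotaD i (hirotaD j (OmegaNeg 0 τ))) =
      diagonal (hirotaD i (hirotaD j (doubling τ)))
        + 2 * diagonal (hirotaD j (schur bSeq (2 * i + 1) (doubling τ)))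
        + 2 * diagonal (hirotaD i (schur bSeq (2 * j + 1) (doubling τ)))
        + 4 * diagonal (schur bSeq (2 * i + 2 * j + 2) (doubling τ)) := by
  have hfin := finite_support_schur_bSeq_apply (doubling τ)
  have hsubset : (Function.support fun m ↦ schur aSeq m * schur bSeq (m + 0) (doubling τ)) ⊆
      (hfin.toFinset ∪ range (2 * i + 2 * j + 3) : Finset ℕ) := by
    intro m hm
    simpa using Or.inl (right_ne_zero_of_mul hm)
  rw [OmegaNeg, finsum_eq_sum_of_support_subset _ hsubset]
  simp only [map_sum, diagonal_hirotaD_hirotaD_schur_aSeq_mul, sum_add_distrib, sum_ite_eq',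
    add_zero]
  simp only [mem_union, mem_range]
  rw [if_pos (by omega), if_pos (by omega), if_pos (by omega), if_pos (by omega), schur_zero,
    Module.End.one_apply]

theorem diagonal_schur_bSeq_of_bkp {τ : ROdd} (hBKP : OmegaNeg 0 τ = doubling τ) (i j : ℕ) :
    diagonal (hirotaD j (schur bSeq (2 * i + 1) (doubling τ)))
      + diagonal (hirotaD i (schur bSeq (2 * j + 1) (doubling τ)))
      + 2 * diagonal (schur bSeq (2 * i + 2 * j + 2) (doubling τ)) = 0 := by
  have h := diagonal_hirotaD_hirotaD_OmegaNeg_zero i j τ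
  rw [hBKP] at h
  refine mul_left_cancel₀ (two_ne_zero : (2 : ROdd) ≠ 0) ?_
  linear_combination -h

/-- The operator `D₁⁶ - 5 D₁³ D₃ - 5 D₃² + 9 D₁ D₅` on `ℂ[t,t']`, where `D_{2i+1}` is `𝐃 i`. -/
noncomputable def bkpHirotaOperator : Module.End ℂ RTwo :=
  𝐃 0 ^ 6 - (5 : ℂ) • (𝐃 0 ^ 3 * 𝐃 1) - (5 : ℂ) • 𝐃 1 ^ 2 + (9 : ℂ) • (𝐃 0 * 𝐃 2)

theorem hirotaD_mul_schur_bSeq :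
    𝐃 2 * schur bSeq 1 + 𝐃 0 * schur bSeq 5 + (2 : ℂ) • schur bSeq 6 =
      (-4 / 45 : ℂ) • bkpHirotaOperator := by
  have b₁ : bSeq 1 = (-2 : ℂ) • 𝐃 0 := by simpa using bSeq_two_mul_add_one 0
  have b₃ : bSeq 3 = (-2 / 3 : ℂ) • 𝐃 1 := by convert bSeq_two_mul_add_one 1 using 2; norm_num
  have b₅ : bSeq 5 = (-2 / 5 : ℂ) • 𝐃 2 := by convert bSeq_two_mul_add_one 2 using 2; norm_num
  have h₁₃ : Commute (bSeq 1) (bSeq 3) := by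
    rw [b₁, b₃]
    exact ((commute_hirotaD 0 1).smul_left _).smul_right _
  have h₁₅ : Commute (bSeq 1) (bSeq 5) := by
    rw [b₁, b₅]
    exact ((commute_hirotaD 0 2).smul_left _).smul_right _
  rw [bkpHirotaOperator, schur_one, schur_five (bSeq_two_mul 1) (bSeq_two_mul 2) h₁₃,
    schur_six (bSeq_two_mul 1) (bSeq_two_mul 2) (bSeq_two_mul 3) h₁₃ h₁₅, b₁, b₃, b₅]
  simp only [smul_pow, mul_smul_comm, smul_mul_assoc, mul_add, ← mul_assoc, ← pow_succ',
    (commute_hirotaD 2 0).eq]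
  module

theorem diagonal_bkpHirotaOperator_doubling {τ : ROdd} (hBKP : OmegaNeg 0 τ = doubling τ) :
    diagonal (bkpHirotaOperator (doubling τ)) = 0 := by
  have h := congrArg (fun T : Module.End ℂ RTwo ↦ diagonal (T (doubling τ))) hirotaD_mul_schur_bSeq
  simp only [LinearMap.add_apply, Module.End.mul_apply, LinearMap.smul_apply, map_add, map_smul,
    Derivation.coeFn_coe] at h
  refine (smul_eq_zero.mp (h.symm.trans ?_)).resolve_left (by norm_num)
  simpa [ofNat_smul_eq_nsmul] using diagonal_schur_bSeq_of_bkp hBKP 0 2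

/-- every nonzero polynomial BKP tau-function satisfies the simplest
Hirota bilinear equation `(D₁⁶ - 5 D₁³D₃ - 5 D₃² + 9 D₁D₅) τ·τ = 0`, written out in
terms of partial derivatives in `t₁ = X 0`, `t₃ = X 1`, `t₅ = X 2`. -/
theorem bkp_tau_hirota (τ : ROdd) (hτ : τ ≠ 0) (hBKP : OmegaNeg 0 τ = doubling τ) :
    τ * (d 0 ^ 6) τ - 6 * d 0 τ * (d 0 ^ 5) τ + 15 * (d 0 ^ 2) τ * (d 0 ^ 4) τ
        - 10 * ((d 0 ^ 3) τ) ^ 2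
      - 5 * (τ * (d 0 ^ 3) (d 1 τ) - 3 * d 0 τ * (d 0 ^ 2) (d 1 τ)
          + 3 * (d 0 ^ 2) τ * d 0 (d 1 τ) - (d 0 ^ 3) τ * d 1 τ)
      - 5 * (τ * d 1 (d 1 τ) - (d 1 τ) ^ 2)
      + 9 * (τ * d 0 (d 2 τ) - d 0 τ * d 2 τ) = 0 := by
  have h := diagonal_bkpHirotaOperator_doubling hBKP
  have doubling_eq : doubling τ = externalProduct τ τ := rfl
  simp only [bkpHirotaOperator, doubling_eq, LinearMap.add_apply, LinearMap.sub_apply,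
    LinearMap.smul_apply, pow_succ, pow_zero, one_mul, Module.End.mul_apply,
    Derivation.coeFn_coe, hirotaD_externalProduct, map_add, map_sub, map_smul,
    diagonal_externalProduct] at h
  simp only [d, pow_succ, pow_zero, one_mul, Module.End.mul_apply, Derivation.coeFn_coe]
  simp only [smul_eq_C_mul, map_ofNat] at h
  refine mul_left_cancel₀ (two_ne_zero : (2 : ROdd) ≠ 0) ?_
  linear_combination h
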